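/- Fix c > 0, and for each integer n > c set p_n = c/n. Then the variance factor n(1-ρ(c/n,n))/δ(c/n,n) decays at rate 1/n; precisely, lim_{n→∞} n² · (1 - ρ(c/n,n))/δ(c/n,n) = (1 - e^{-c})/c. In particular, the variance of the asymptotic consensus value tends to zero as n → ∞ at rate 1/n when the expected degree is held fixed at c. -/

import Mathlib

open Filter

/-- Fix `c > 0` and set `p_n = c/n`. The variance factor
`n(1-ρ(c/n,n))/δ(c/n,n)` decays at rate `1/n`: precisely,
`lim_{n→∞} n²·(1 - ρ(c/n,n))/δ(c/n,n) = (1 - e^{-c})/c`, where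
`ρ(p,n) = p(n-1)/(p(n-2)+1-(1-p)^n)` and `δ(p,n) = n + n(n-1)ρ(p,n)`. In particular, the
variance of the asymptotic consensus value tends to zero at rate `1/n` as `n → ∞` when
the expected degree is held fixed at `c`. -/
theorem variance_factor_limit_fixed_degree (c : ℝ) (hc : 0 < c) :
    Tendsto
      (fun n : ℕ =>
        ((n : ℝ) ^ 2 *
          (1 - (c / n) * ((n : ℝ) - 1) /
              ((c / n) * ((n : ℝ) - 2) + 1 - (1 - c / n) ^ n)) /
            ((n : ℝ) + (n : ℝ) * ((n : ℝ) - 1) *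
              ((c / n) * ((n : ℝ) - 1) /
                ((c / n) * ((n : ℝ) - 2) + 1 - (1 - c / n) ^ n)))))
      atTop (nhds ((1 - Real.exp (-c)) / c)) := by
  have hx : Tendsto (fun n : ℕ => (1 : ℝ) / n) atTop (nhds 0) :=
    tendsto_one_div_atTop_nhds_zero_nat
  have hQ : Tendsto (fun n : ℕ => (1 - c / (n : ℝ)) ^ n) atTop (nhds (Real.exp (-c))) := by
    have h := Real.tendsto_one_add_div_pow_exp (-c)
    refine h.congr fun n => ?_
    congr 1
    ring
  have hD : Tendsto (fun n : ℕ => c * (1 - 2 * (1 / (n : ℝ))) + 1 - (1 - c / (n : ℝ)) ^ n)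
      atTop (nhds (c * (1 - 2 * 0) + 1 - Real.exp (-c))) :=
    ((((hx.const_mul 2).const_sub 1).const_mul c).add_const 1).sub hQ
  have he : Real.exp (-c) < 1 := by
    rw [Real.exp_lt_one_iff]
    linarith
  have hDpos := hD.eventually (lt_mem_nhds (show (0 : ℝ) < c * (1 - 2 * 0) + 1 - Real.exp (-c) by
    linarith))
  have hN := (hQ.const_sub 1).sub (hx.const_mul c)
  have hM := (hx.mul hD).add (((hx.const_sub 1).pow 2).const_mul c)
  have hlim := hN.div hM (by simp [hc.ne'])
  have hval : (1 - Real.exp (-c) - c * 0) /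
      (0 * (c * (1 - 2 * 0) + 1 - Real.exp (-c)) + c * (1 - 0) ^ 2)
      = (1 - Real.exp (-c)) / c := by
    congr 1 <;> ring
  rw [hval] at hlim
  refine hlim.congr' ?_
  filter_upwards [hDpos, eventually_ge_atTop 2] with n hn hn2
  have hnR : (2 : ℝ) ≤ n := by exact_mod_cast hn2
  have hn0 : (n : ℝ) ≠ 0 := by linarith
  simp only [Pi.div_apply]
  generalize (1 - c / (n : ℝ)) ^ n = Q at hn ⊢
  generalize (n : ℝ) = x at *
  have e : c / x * (x - 2) + 1 - Q = c * (1 - 2 * (1 / x)) + 1 - Q := by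
    field_simp
  rw [e]
  obtain ⟨D, hDe⟩ : ∃ D, D = c * (1 - 2 * (1 / x)) + 1 - Q := ⟨_, rfl⟩
  have hQe : Q = c * (1 - 2 * (1 / x)) + 1 - D := by linarith
  rw [← hDe] at hn ⊢
  have hx0 : 0 < x := by linarith
  have h1 : 1 / x * D + c * (1 - 1 / x) ^ 2 ≠ 0 := by positivity
  have h2 : x + x * (x - 1) * (c / x * (x - 1) / D) = x ^ 2 / D * (1 / x * D + c * (1 - 1 / x) ^ 2) := by
    field_simp
  have h3 : x ^ 2 * (1 - c / x * (x - 1) / D) = x ^ 2 / D * (1 - Q - c * (1 / x)) := by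
    rw [hQe]
    field_simp
    ring
  rw [h2, h3, mul_div_mul_left _ _ (by positivity)]
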